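/- Let d ≥ 1, let D ⊆ ℝ^d be a bounded measurable set of Lebesgue measure m(D), and let σ : ℝ → ℝ satisfy |σ(x) − σ(y)| ≤ L₁|x − y| + L₂|x − y|·(log₊(max(|x|,|y|)))^{1/2} for all x, y ∈ ℝ, where L₁, L₂ > 0. Then for every pair of smooth functions u, v : ℝ^d → ℝ with compact support contained in D, every ε > 0 and every α ∈ (0,1): ∫_D |σ(u(x)) − σ(v(x))|² dx ≤ 2L₁²·‖u − v‖² + 2L₂²·[ ε ∫ |∇(u−v)(x)|² dx + (d/4)·log(1/ε)·‖u − v‖² + ‖u − v‖²·log‖u − v‖ + (1/(2(1−α)e))·(‖u‖^{2(1−α)} + ‖v‖^{2(1−α)})·‖u − v‖^{2α} + (1/(2(1−α)e))·(4 m(D))^{1−α}·‖u − v‖^{2α} ], where ‖·‖ denotes the L² norm and ‖u−v‖² log‖u−v‖ is interpreted as 0 when u = v. -/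

import Mathlib

open MeasureTheory

/-!
The heart of the matter is the Euclidean logarithmic Sobolev inequality. In one dimension,
`h² ≤ r ∫ h² + r⁻¹ ∫ h'²` for every `r > 0`, and a suitable `r` turns this into
`h² ≤ (∫ h²) * exp (2 c (∫ h'²) / (∫ h²) - (1 + log c) / 2)`. Applied on the lines parallel to the
`i`-th axis, it bounds a density `g = w²` by its `i`-th marginal times `exp ψᵢ`, where `∫ g ψᵢ`
is controlled by `∫ (∂ᵢw)²`. The Loomis–Whitney type inequality
`∫ (g ∏ᵢ gᵢ) ^ (1/n) ≤ (∫ g) ^ (1 + 1/n)` for the marginals `gᵢ`, combined with `1 + x ≤ eˣ`,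
then gives `∫ g log g ≤ (∫ g) log (∫ g) + ∑ᵢ ∫ g ψᵢ`.

To pass from `log (u - v)²` to `log (max 1 |u| |v|)`, use `log y ≤ y ^ β / (β e)` with
`y = m² / (u - v)²`, `m = max 1 |u| |v|` and `β = 1 - α`; the resulting products
`(u - v) ^ (2α) * m ^ (2(1 - α))` are integrated by Hölder's inequality.
-/

section Marginals

variable {ι : Type*} [DecidableEq ι] {A : ι → Type*} [∀ i, MeasurableSpace (A i)]
  {μ : ∀ i, Measure (A i)}

lemma lintegral_mul_lmarginal_div_lmarginal_le [Fintype ι] [∀ i, SigmaFinite (μ i)]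
    (s : Finset ι) {g q : (∀ i, A i) → ENNReal} (hg : Measurable g) (hq : Measurable q) :
    ∫⁻ x, g x * ((∫⋯∫⁻_s, q ∂μ) x / (∫⋯∫⁻_s, g ∂μ) x) ∂.pi μ ≤ ∫⁻ x, q x ∂.pi μ := by
  refine lintegral_le_of_lmarginal_le s
    (hg.mul ((hq.lmarginal μ).div (hg.lmarginal μ))) hq fun x => ?_
  have marginal_updateFinset (f : (∀ i, A i) → ENNReal) (y : ∀ i : s, A i) :
      (∫⋯∫⁻_s, f ∂μ) (Function.updateFinset x s y) = (∫⋯∫⁻_s, f ∂μ) x :=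
    lmarginal_congr μ f fun i hi => by simp [Function.updateFinset, hi]
  calc (∫⋯∫⁻_s, fun y => g y * ((∫⋯∫⁻_s, q ∂μ) y / (∫⋯∫⁻_s, g ∂μ) y) ∂μ) x
      = ∫⁻ y : ∀ i : s, A i, g (Function.updateFinset x s y) *
          ((∫⋯∫⁻_s, q ∂μ) x / (∫⋯∫⁻_s, g ∂μ) x) ∂.pi fun i : s => μ i :=
        lintegral_congr fun y => by simp only [marginal_updateFinset]
    _ = (∫⋯∫⁻_s, g ∂μ) x * ((∫⋯∫⁻_s, q ∂μ) x / (∫⋯∫⁻_s, g ∂μ) x) :=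
        lintegral_mul_const _ (hg.comp measurable_updateFinset)
    _ ≤ (∫⋯∫⁻_s, q ∂μ) x := ENNReal.mul_div_le

/-- The marginal of `f` in the `i`-th coordinate: the real-valued counterpart of `lmarginal μ {i}`.
It is a function on the whole product, constant in the `i`-th coordinate, and takes the value `0`
on the fibres where `f` is not integrable. -/
noncomputable def coordMarginal (μ : ∀ i, Measure (A i)) (i : ι) (f : (∀ i, A i) → ℝ)
    (x : ∀ i, A i) : ℝ :=
  ∫ t, f (Function.update x i t) ∂μ i

variable {f g q : (∀ i, A i) → ℝ} {i : ι}

lemma coordMarginal_eq_toReal_lmarginal (hf : Measurable f) (hf0 : ∀ x, 0 ≤ f x) (x : ∀ i, A i) :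
    coordMarginal μ i f x = ((∫⋯∫⁻_{i}, (fun y => ENNReal.ofReal (f y)) ∂μ) x).toReal := by
  rw [lmarginal_singleton]
  exact integral_eq_lintegral_of_nonneg_ae (.of_forall fun t => hf0 _)
    (hf.comp (measurable_update x)).aestronglyMeasurable

lemma coordMarginal_nonneg (hf0 : ∀ x, 0 ≤ f x) (x : ∀ i, A i) : 0 ≤ coordMarginal μ i f x :=
  integral_nonneg fun _ => hf0 _

variable [∀ i, SigmaFinite (μ i)]

lemma measurable_coordMarginal (hf : Measurable f) (hf0 : ∀ x, 0 ≤ f x) :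
    Measurable (coordMarginal μ i f) := by
  rw [funext (coordMarginal_eq_toReal_lmarginal hf hf0)]
  exact (hf.ennreal_ofReal.lmarginal μ).ennreal_toReal

variable [Fintype ι]

lemma lintegral_mul_coordMarginal_div_le (hg : Measurable g) (hg0 : ∀ x, 0 ≤ g x)
    (hq : Measurable q) (hq0 : ∀ x, 0 ≤ q x) :
    ∫⁻ x, ENNReal.ofReal (g x * (coordMarginal μ i q x / coordMarginal μ i g x)) ∂.pi μ ≤
      ∫⁻ x, ENNReal.ofReal (q x) ∂.pi μ := by
  refine le_trans (lintegral_mono fun x => ?_) (lintegral_mul_lmarginal_div_lmarginal_le {i}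
    hg.ennreal_ofReal hq.ennreal_ofReal)
  rcases (coordMarginal_nonneg hg0 x : 0 ≤ coordMarginal μ i g x).eq_or_lt with hG | hG
  · simp [← hG]
  · rw [ENNReal.ofReal_mul (hg0 x), ENNReal.ofReal_div_of_pos hG]
    rw [coordMarginal_eq_toReal_lmarginal hg hg0] at hG ⊢
    rw [coordMarginal_eq_toReal_lmarginal hq hq0,
      ENNReal.ofReal_toReal (ENNReal.toReal_pos_iff.1 hG).2.ne]
    gcongr
    exact ENNReal.ofReal_toReal_le

lemma integrable_mul_coordMarginal_div (hg : Measurable g) (hg0 : ∀ x, 0 ≤ g x)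
    (hq : Measurable q) (hq0 : ∀ x, 0 ≤ q x) (hqi : Integrable q (.pi μ)) :
    Integrable (fun x => g x * (coordMarginal μ i q x / coordMarginal μ i g x)) (.pi μ) := by
  refine (lintegral_ofReal_ne_top_iff_integrable
    (hg.mul ((measurable_coordMarginal hq hq0).div
      (measurable_coordMarginal hg hg0))).aestronglyMeasurable
    (.of_forall fun x => mul_nonneg (hg0 x)
      (div_nonneg (coordMarginal_nonneg hq0 x) (coordMarginal_nonneg hg0 x)))).1 ?_
  exact ((lintegral_mul_coordMarginal_div_le hg hg0 hq hq0).trans_lt hqi.lintegral_lt_top).ne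

lemma integral_mul_coordMarginal_div_le (hg : Measurable g) (hg0 : ∀ x, 0 ≤ g x)
    (hq : Measurable q) (hq0 : ∀ x, 0 ≤ q x) (hqi : Integrable q (.pi μ)) :
    ∫ x, g x * (coordMarginal μ i q x / coordMarginal μ i g x) ∂.pi μ ≤ ∫ x, q x ∂.pi μ := by
  have h_nonneg (x : ∀ i, A i) : 0 ≤ g x * (coordMarginal μ i q x / coordMarginal μ i g x) :=
    mul_nonneg (hg0 x) (div_nonneg (coordMarginal_nonneg hq0 x) (coordMarginal_nonneg hg0 x))
  rw [← ENNReal.ofReal_le_ofReal_iff (integral_nonneg hq0),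
    ofReal_integral_eq_lintegral_ofReal hqi (.of_forall hq0),
    ofReal_integral_eq_lintegral_ofReal (integrable_mul_coordMarginal_div hg hg0 hq hq0 hqi)
      (.of_forall h_nonneg)]
  exact lintegral_mul_coordMarginal_div_le hg hg0 hq hq0

end Marginals

section Tensorization

lemma lintegral_rpow_mul_prod_lmarginal_rpow_le {ι : Type*} [Fintype ι] [Nonempty ι]
    [DecidableEq ι] {A : ι → Type*} [∀ i, MeasurableSpace (A i)] {μ : ∀ i, Measure (A i)}
    [∀ i, SigmaFinite (μ i)] {g : (∀ i, A i) → ENNReal} (hg : Measurable g) :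
    ∫⁻ x, g x ^ (1 / Fintype.card ι : ℝ) *
        ∏ i, (∫⋯∫⁻_{i}, g ∂μ) x ^ (1 / Fintype.card ι : ℝ) ∂.pi μ ≤
      (∫⁻ x, g x ∂.pi μ) ^ (1 + 1 / Fintype.card ι : ℝ) := by
  have hn : (0 : ℝ) < Fintype.card ι := by exact_mod_cast Fintype.card_pos
  have hexp : 1 - ((Fintype.card ι : ℝ) - 1) * (1 / Fintype.card ι) = 1 / Fintype.card ι := by
    field_simp; ring
  have hle : ((Fintype.card ι : ℝ) - 1) * (1 / Fintype.card ι) ≤ 1 := by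
    rw [mul_one_div, div_le_one hn]; linarith
  simpa only [hexp, lmarginal_singleton] using
    lintegral_mul_prod_lintegral_pow_le μ (by positivity) hle hg

lemma add_div_card_le_rpow_mul_prod_rpow {ι : Type*} [Fintype ι] [Nonempty ι] {y M : ℝ}
    {G ψ : ι → ℝ} (hy : 0 < y) (hM : 0 < M) (hG : ∀ i, y ≤ G i * Real.exp (ψ i)) :
    y + (y * Real.log y - y * Real.log M - ∑ i, y * ψ i) / Fintype.card ι ≤
      M ^ (-(1 / Fintype.card ι : ℝ)) *
        (y ^ (1 / Fintype.card ι : ℝ) * ∏ i, G i ^ (1 / Fintype.card ι : ℝ)) := by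
  set n : ℝ := (Fintype.card ι : ℝ) with hn
  have hn0 : 0 < n := by rw [hn]; exact_mod_cast Fintype.card_pos
  have hprod : y * Real.exp (-(∑ i, ψ i) / n) ≤ ∏ i, G i ^ (1 / n) :=
    calc y * Real.exp (-(∑ i, ψ i) / n)
        = ∏ i, (y * Real.exp (-ψ i)) ^ (1 / n) := by
          have hroot (i : ι) : (y * Real.exp (-ψ i)) ^ (1 / n) =
              y ^ (1 / n) * Real.exp (-ψ i / n) := by
            rw [Real.mul_rpow hy.le (Real.exp_nonneg _), ← Real.exp_mul, mul_one_div]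
          simp only [hroot, Finset.prod_mul_distrib, Finset.prod_const, Finset.card_univ,
            ← Real.exp_sum, ← Finset.sum_div, Finset.sum_neg_distrib]
          rw [← Real.rpow_mul_natCast hy.le, ← hn, one_div_mul_cancel hn0.ne', Real.rpow_one]
      _ ≤ ∏ i, G i ^ (1 / n) := by
          gcongr with i
          rw [Real.exp_neg, ← div_eq_mul_inv, div_le_iff₀ (Real.exp_pos _)]
          exact hG i
  calc y + (y * Real.log y - y * Real.log M - ∑ i, y * ψ i) / n
      = y * ((Real.log y - Real.log M - ∑ i, ψ i) / n + 1) := by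
        rw [← Finset.mul_sum]; ring
    _ ≤ y * Real.exp ((Real.log y - Real.log M - ∑ i, ψ i) / n) := by
        gcongr; exact Real.add_one_le_exp _
    _ = M ^ (-(1 / n)) * (y ^ (1 / n) * (y * Real.exp (-(∑ i, ψ i) / n))) := by
        rw [Real.rpow_def_of_pos hM, Real.rpow_def_of_pos hy, mul_left_comm _ y, mul_left_comm _ y,
          ← Real.exp_add, ← Real.exp_add]
        ring_nf
    _ ≤ M ^ (-(1 / n)) * (y ^ (1 / n) * ∏ i, G i ^ (1 / n)) := by gcongr

variable {ι : Type*} [Fintype ι] [DecidableEq ι] {A : ι → Type*} [∀ i, MeasurableSpace (A i)]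
  {μ : ∀ i, Measure (A i)} [∀ i, SigmaFinite (μ i)] {g : (∀ i, A i) → ℝ} {ψ : ι → (∀ i, A i) → ℝ}

lemma lintegral_add_div_card_le [Nonempty ι] (hg : Measurable g) (hg0 : ∀ x, 0 ≤ g x)
    (hgi : Integrable g (.pi μ)) (hM : 0 < ∫ x, g x ∂.pi μ)
    (hψ : ∀ i x, g x ≤ coordMarginal μ i g x * Real.exp (ψ i x)) :
    ∫⁻ x, ENNReal.ofReal (g x + (g x * Real.log (g x) - g x * Real.log (∫ x, g x ∂.pi μ) -
        ∑ i, g x * ψ i x) / Fintype.card ι) ∂.pi μ ≤ ENNReal.ofReal (∫ x, g x ∂.pi μ) := by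
  set M := ∫ x, g x ∂.pi μ
  set p : ℝ := 1 / (Fintype.card ι : ℝ)
  have hp0 : 0 ≤ p := by positivity
  set γ : (∀ i, A i) → ENNReal := fun x => ENNReal.ofReal (g x)
  have hpointwise (x : ∀ i, A i) :
      ENNReal.ofReal (g x + (g x * Real.log (g x) - g x * Real.log M - ∑ i, g x * ψ i x) /
        Fintype.card ι) ≤
      ENNReal.ofReal (M ^ (-p)) * (γ x ^ p * ∏ i, (∫⋯∫⁻_{i}, γ ∂μ) x ^ p) := by
    rcases (hg0 x).eq_or_lt with hx | hx
    · simp [← hx]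
    · refine (ENNReal.ofReal_le_ofReal
        (add_div_card_le_rpow_mul_prod_rpow hx hM fun i => hψ i x)).trans ?_
      rw [ENNReal.ofReal_mul (by positivity), ENNReal.ofReal_mul (by positivity),
        ENNReal.ofReal_prod_of_nonneg fun i _ => Real.rpow_nonneg (coordMarginal_nonneg hg0 x) _,
        ← ENNReal.ofReal_rpow_of_nonneg hx.le hp0]
      gcongr with i
      rw [← ENNReal.ofReal_rpow_of_nonneg (coordMarginal_nonneg hg0 x) hp0,
        coordMarginal_eq_toReal_lmarginal hg hg0]
      gcongr
      exact ENNReal.ofReal_toReal_le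
  calc ∫⁻ x, ENNReal.ofReal (g x + (g x * Real.log (g x) - g x * Real.log M -
        ∑ i, g x * ψ i x) / Fintype.card ι) ∂.pi μ
      ≤ ENNReal.ofReal (M ^ (-p)) * ∫⁻ x, γ x ^ p * ∏ i, (∫⋯∫⁻_{i}, γ ∂μ) x ^ p ∂.pi μ := by
        rw [← lintegral_const_mul' _ _ ENNReal.ofReal_ne_top]
        exact lintegral_mono hpointwise
    _ ≤ ENNReal.ofReal (M ^ (-p)) * (∫⁻ x, γ x ∂.pi μ) ^ (1 + p) := by
        gcongr
        exact lintegral_rpow_mul_prod_lmarginal_rpow_le hg.ennreal_ofReal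
    _ = ENNReal.ofReal M := by
        rw [← ofReal_integral_eq_lintegral_ofReal hgi (.of_forall hg0),
          ENNReal.ofReal_rpow_of_pos hM, ← ENNReal.ofReal_mul (by positivity),
          ← Real.rpow_add hM]
        simp

theorem integral_mul_log_le_of_le_coordMarginal_mul_exp (hg : Measurable g) (hg0 : ∀ x, 0 ≤ g x)
    (hgi : Integrable g (.pi μ)) (hglog : Integrable (fun x => g x * Real.log (g x)) (.pi μ))
    (hψi : ∀ i, Integrable (fun x => g x * ψ i x) (.pi μ))
    (hψ : ∀ i x, g x ≤ coordMarginal μ i g x * Real.exp (ψ i x)) :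
    ∫ x, g x * Real.log (g x) ∂.pi μ ≤
      (∫ x, g x ∂.pi μ) * Real.log (∫ x, g x ∂.pi μ) + ∑ i, ∫ x, g x * ψ i x ∂.pi μ := by
  rcases isEmpty_or_nonempty ι with hι | hι
  · simp [Measure.pi_of_empty μ isEmptyElim]
  rcases (integral_nonneg hg0 : 0 ≤ ∫ x, g x ∂.pi μ).eq_or_lt with hM | hM
  · have hg_ae : g =ᵐ[Measure.pi μ] 0 := (integral_eq_zero_iff_of_nonneg hg0 hgi).1 hM.symm
    have hmul_ae (F : (∀ i, A i) → ℝ) : ∫ x, g x * F x ∂.pi μ = 0 :=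
      integral_eq_zero_of_ae (hg_ae.mono fun x hx => by simp [hx])
    simp [hmul_ae, ← hM]
  set M := ∫ x, g x ∂.pi μ
  set n : ℝ := (Fintype.card ι : ℝ) with hn
  have hn0 : 0 < n := by rw [hn]; exact_mod_cast Fintype.card_pos
  have hsum := integrable_finsetSum Finset.univ fun i _ => hψi i
  have hrel : Integrable (fun x => g x * Real.log (g x) - g x * Real.log M) (.pi μ) :=
    hglog.sub (hgi.mul_const _)
  have hdefect : Integrable (fun x => g x * Real.log (g x) - g x * Real.log M -
      ∑ i, g x * ψ i x) (.pi μ) := hrel.sub hsum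
  have hle : ∫ x, (g x + (g x * Real.log (g x) - g x * Real.log M - ∑ i, g x * ψ i x) / n) ∂.pi μ
      ≤ M := by
    refine (integral_eq_lintegral_pos_part_sub_lintegral_neg_part
      (hgi.add (hdefect.div_const n))).trans_le ?_
    exact (sub_le_self _ ENNReal.toReal_nonneg).trans
      (ENNReal.toReal_le_of_le_ofReal hM.le (lintegral_add_div_card_le hg hg0 hgi hM hψ))
  have heq : ∫ x, (g x + (g x * Real.log (g x) - g x * Real.log M - ∑ i, g x * ψ i x) / n) ∂.pi μ
      = M + (∫ x, g x * Real.log (g x) ∂.pi μ - M * Real.log M -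
          ∑ i, ∫ x, g x * ψ i x ∂.pi μ) / n := by
    rw [integral_add hgi (hdefect.div_const n), integral_div,
      integral_sub hrel hsum, integral_sub hglog (hgi.mul_const _),
      integral_mul_const, integral_finsetSum _ fun i _ => hψi i]
  rw [heq, add_le_iff_nonpos_right, div_nonpos_iff] at hle
  linarith [hle.resolve_left fun h => hn0.not_ge h.2]

theorem integral_mul_log_le_of_le_coordMarginal_mul_exp_div {q : ι → (∀ i, A i) → ℝ} {a κ : ℝ}
    (ha : 0 ≤ a) (hg : Measurable g) (hg0 : ∀ x, 0 ≤ g x) (hgi : Integrable g (.pi μ))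
    (hglog : Integrable (fun x => g x * Real.log (g x)) (.pi μ)) (hq : ∀ i, Measurable (q i))
    (hq0 : ∀ i x, 0 ≤ q i x) (hqi : ∀ i, Integrable (q i) (.pi μ))
    (h : ∀ i x, g x ≤ coordMarginal μ i g x *
      Real.exp (a * (coordMarginal μ i (q i) x / coordMarginal μ i g x) - κ)) :
    ∫ x, g x * Real.log (g x) ∂.pi μ ≤
      (∫ x, g x ∂.pi μ) * Real.log (∫ x, g x ∂.pi μ) + a * (∑ i, ∫ x, q i x ∂.pi μ) -
        Fintype.card ι * κ * ∫ x, g x ∂.pi μ := by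
  let ρ (i : ι) (x : ∀ i, A i) : ℝ := coordMarginal μ i (q i) x / coordMarginal μ i g x
  have hρi (i) : Integrable (fun x => g x * ρ i x) (.pi μ) :=
    integrable_mul_coordMarginal_div hg hg0 (hq i) (hq0 i) (hqi i)
  have hψ_mul (i x) : g x * (a * ρ i x - κ) = a * (g x * ρ i x) - g x * κ := by ring
  have hψi (i) : Integrable (fun x => g x * (a * ρ i x - κ)) (.pi μ) := by
    simp only [hψ_mul]
    exact ((hρi i).const_mul a).sub (hgi.mul_const κ)
  have hψ_le (i) : ∫ x, g x * (a * ρ i x - κ) ∂.pi μ ≤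
      a * (∫ x, q i x ∂.pi μ) - (∫ x, g x ∂.pi μ) * κ := by
    simp only [hψ_mul]
    rw [integral_sub ((hρi i).const_mul _) (hgi.mul_const _), integral_const_mul,
      integral_mul_const]
    exact sub_le_sub_right (mul_le_mul_of_nonneg_left
      (integral_mul_coordMarginal_div_le hg hg0 (hq i) (hq0 i) (hqi i)) ha) _
  calc ∫ x, g x * Real.log (g x) ∂.pi μ
      ≤ (∫ x, g x ∂.pi μ) * Real.log (∫ x, g x ∂.pi μ) +
          ∑ i, ∫ x, g x * (a * ρ i x - κ) ∂.pi μ :=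
        integral_mul_log_le_of_le_coordMarginal_mul_exp hg hg0 hgi hglog hψi h
    _ ≤ (∫ x, g x ∂.pi μ) * Real.log (∫ x, g x ∂.pi μ) +
          ∑ i, (a * (∫ x, q i x ∂.pi μ) - (∫ x, g x ∂.pi μ) * κ) := by
        gcongr with i
        exact hψ_le i
    _ = _ := by
        rw [Finset.sum_sub_distrib, ← Finset.mul_sum, Finset.sum_const, Finset.card_univ,
          nsmul_eq_mul]
        ring

end Tensorization

section OneDimensional

variable {h : ℝ → ℝ}

lemma sq_le_mul_integral_sq_add_mul_integral_deriv_sq (hh : ContDiff ℝ 1 h)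
    (hs : HasCompactSupport h) {r : ℝ} (hr : 0 < r) (t : ℝ) :
    h t ^ 2 ≤ r * (∫ s, h s ^ 2) + r⁻¹ * ∫ s, deriv h s ^ 2 := by
  have hi : Integrable fun s => h s ^ 2 :=
    (hh.continuous.memLp_of_hasCompactSupport hs).integrable_sq
  have hi' : Integrable fun s => deriv h s ^ 2 :=
    ((hh.continuous_deriv le_rfl).memLp_of_hasCompactSupport hs.deriv).integrable_sq
  have hderiv (s : ℝ) : deriv (fun s => h s ^ 2) s ≤ r * h s ^ 2 + r⁻¹ * deriv h s ^ 2 := by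
    have hsq : deriv (fun s => h s ^ 2) s = 2 * h s * deriv h s := by
      simpa using ((hh.differentiable one_ne_zero s).hasDerivAt.fun_pow 2).deriv
    have hyoung : 0 ≤ r⁻¹ * (r * h s - deriv h s) ^ 2 := by positivity
    rw [hsq]
    field_simp at hyoung ⊢
    linarith
  calc h t ^ 2 = ∫ s in Set.Iic t, deriv (fun s => h s ^ 2) s :=
        (HasCompactSupport.integral_Iic_deriv_eq (hh.pow 2)
          (hs.comp_left (g := (· ^ 2)) (by simp)) t).symm
    _ ≤ ∫ s in Set.Iic t, (r * h s ^ 2 + r⁻¹ * deriv h s ^ 2) :=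
        setIntegral_mono
          (((hh.pow 2).continuous_deriv le_rfl).integrable_of_hasCompactSupport
            (hs.comp_left (g := (· ^ 2)) (by simp)).deriv).integrableOn
          ((hi.const_mul r).add (hi'.const_mul r⁻¹)).integrableOn hderiv
    _ ≤ ∫ s, (r * h s ^ 2 + r⁻¹ * deriv h s ^ 2) :=
        setIntegral_le_integral ((hi.const_mul r).add (hi'.const_mul r⁻¹))
          (.of_forall fun s => by positivity)
    _ = r * (∫ s, h s ^ 2) + r⁻¹ * ∫ s, deriv h s ^ 2 := by
        rw [integral_add (hi.const_mul r) (hi'.const_mul r⁻¹), integral_const_mul,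
          integral_const_mul]

lemma sq_le_integral_sq_mul_exp (hh : ContDiff ℝ 1 h) (hs : HasCompactSupport h) {c : ℝ}
    (hc : 0 < c) (t : ℝ) :
    h t ^ 2 ≤ (∫ s, h s ^ 2) *
      Real.exp (2 * c * ((∫ s, deriv h s ^ 2) / ∫ s, h s ^ 2) - (1 + Real.log c) / 2) := by
  rcases eq_or_ne (h t) 0 with ht | ht
  · rw [ht, zero_pow two_ne_zero]
    exact mul_nonneg (integral_nonneg fun s => sq_nonneg _) (Real.exp_nonneg _)
  have hpos : 0 < ∫ s, h s ^ 2 :=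
    Continuous.integral_pos_of_hasCompactSupport_nonneg_nonzero (f := fun s => h s ^ 2)
      (hh.continuous.pow 2) (hs.comp_left (g := (· ^ 2)) (by simp)) (fun s => sq_nonneg _)
      (pow_ne_zero 2 ht)
  set G := ∫ s, h s ^ 2
  set K := ∫ s, deriv h s ^ 2
  have hsqrt : √c * √c = c := Real.mul_self_sqrt hc.le
  have hsqrt0 : 0 < √c := Real.sqrt_pos.2 hc
  have hscale : Real.exp (-Real.log c / 2) = (√c)⁻¹ := by
    rw [neg_div, Real.exp_neg, ← Real.log_sqrt hc.le, Real.exp_log hsqrt0]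
  -- `r = 1 / (2 * √c)` makes the right-hand side tangent to the exponential.
  calc h t ^ 2 ≤ (2 * √c)⁻¹ * G + (2 * √c)⁻¹⁻¹ * K :=
        sq_le_mul_integral_sq_add_mul_integral_deriv_sq hh hs (by positivity) t
    _ = G * ((√c)⁻¹ * ((2 * c * (K / G) - 1 / 2) + 1)) := by
        generalize √c = R at hsqrt hsqrt0
        rw [← hsqrt]
        field_simp
        ring
    _ ≤ G * ((√c)⁻¹ * Real.exp (2 * c * (K / G) - 1 / 2)) := by
        gcongr
        exact Real.add_one_le_exp _
    _ = G * Real.exp (2 * c * (K / G) - (1 + Real.log c) / 2) := by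
        rw [← hscale, ← Real.exp_add]
        ring_nf

end OneDimensional

section LogSobolev

open Module

lemma integrable_sq_mul_log_sq {X : Type*} [TopologicalSpace X] [MeasurableSpace X]
    [OpensMeasurableSpace X] {μ : Measure X} [IsFiniteMeasureOnCompacts μ] {f : X → ℝ}
    (hf : Continuous f) (hs : HasCompactSupport f) :
    Integrable (fun x => f x ^ 2 * Real.log (f x ^ 2)) μ :=
  Continuous.integrable_of_hasCompactSupport (Real.continuous_mul_log.comp (hf.pow 2))
    (hs.comp_left (g := fun y => y ^ 2 * Real.log (y ^ 2)) (by simp))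

lemma sq_le_coordMarginal_sq_mul_exp {ι : Type*} [Fintype ι] [DecidableEq ι] {f : (ι → ℝ) → ℝ}
    (hf : ContDiff ℝ 1 f) (hs : HasCompactSupport f) {c : ℝ} (hc : 0 < c) (i : ι) (x : ι → ℝ) :
    f x ^ 2 ≤ coordMarginal (fun _ => volume) i (fun y => f y ^ 2) x *
      Real.exp (2 * c *
        (coordMarginal (fun _ => volume) i (fun y => fderiv ℝ f y (Pi.single i 1) ^ 2) x /
          coordMarginal (fun _ => volume) i (fun y => f y ^ 2) x) - (1 + Real.log c) / 2) := by
  have hderiv (t : ℝ) : deriv (fun t => f (Function.update x i t)) t =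
      fderiv ℝ f (Function.update x i t) (Pi.single i 1) :=
    ((hf.differentiable one_ne_zero _).hasFDerivAt.comp_hasDerivAt t
      (hasDerivAt_update x i t)).deriv
  simpa only [coordMarginal, Function.update_eq_self, Function.comp_def,
    hderiv] using sq_le_integral_sq_mul_exp (hf.comp (contDiff_update 1 x i))
      (hs.comp_isClosedEmbedding (isClosedEmbedding_update x i)) hc (x i)

theorem integral_sq_mul_log_sq_le_sum_fderiv_single {ι : Type*} [Fintype ι] [DecidableEq ι]
    {f : (ι → ℝ) → ℝ} (hf : ContDiff ℝ 1 f) (hs : HasCompactSupport f) {c : ℝ} (hc : 0 < c) :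
    ∫ x, f x ^ 2 * Real.log (f x ^ 2) ≤
      (∫ x, f x ^ 2) * Real.log (∫ x, f x ^ 2) +
        2 * c * (∑ i, ∫ x, fderiv ℝ f x (Pi.single i 1) ^ 2) -
        Fintype.card ι / 2 * (1 + Real.log c) * ∫ x, f x ^ 2 := by
  have hpartial (i : ι) : Continuous fun x => fderiv ℝ f x (Pi.single i 1) :=
    (hf.continuous_fderiv one_ne_zero).clm_apply continuous_const
  refine (integral_mul_log_le_of_le_coordMarginal_mul_exp_div (μ := fun _ : ι => volume)
    (by positivity) (hf.continuous.measurable.pow_const 2) (fun x => sq_nonneg _)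
    (hf.continuous.memLp_of_hasCompactSupport hs).integrable_sq
    (integrable_sq_mul_log_sq hf.continuous hs) (fun i => (hpartial i).measurable.pow_const 2)
    (fun i x => sq_nonneg _)
    (fun i => ((hpartial i).memLp_of_hasCompactSupport (hs.fderiv_apply ℝ _)).integrable_sq)
    (sq_le_coordMarginal_sq_mul_exp hf hs hc)).trans_eq ?_
  rw [← volume_pi]
  ring

lemma sum_sq_apply_orthonormalBasis {ι E : Type*} [Fintype ι] [NormedAddCommGroup E]
    [InnerProductSpace ℝ E] (b : OrthonormalBasis ι ℝ E) (L : E →L[ℝ] ℝ) :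
    ∑ i, L (b i) ^ 2 = ‖L‖ ^ 2 := by
  have := b.toBasis.finiteDimensional_of_finite
  have : CompleteSpace E := FiniteDimensional.complete ℝ E
  rw [← (InnerProductSpace.toDual ℝ E).symm.norm_map L, ← b.sum_sq_norm_inner_left]
  simp

variable {E : Type*} [NormedAddCommGroup E] [InnerProductSpace ℝ E] [FiniteDimensional ℝ E]
  [MeasurableSpace E] [BorelSpace E]

theorem integral_sq_mul_log_sq_le {w : E → ℝ} (hw : ContDiff ℝ 1 w) (hs : HasCompactSupport w)
    {c : ℝ} (hc : 0 < c) :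
    ∫ x, w x ^ 2 * Real.log (w x ^ 2) ≤
      (∫ x, w x ^ 2) * Real.log (∫ x, w x ^ 2) + 2 * c * (∫ x, ‖fderiv ℝ w x‖ ^ 2) -
        finrank ℝ E / 2 * (1 + Real.log c) * ∫ x, w x ^ 2 := by
  let b := stdOrthonormalBasis ℝ E
  let e : (Fin (finrank ℝ E) → ℝ) ≃L[ℝ] E :=
    (EuclideanSpace.equiv _ ℝ).symm.trans b.repr.symm.toContinuousLinearEquiv
  have he_basis (i) : e (Pi.single i 1) = b i := b.repr_symm_single i
  have he_integral (F : E → ℝ) : ∫ x, F (e x) = ∫ x, F x :=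
    (b.measurePreserving_repr_symm.comp (PiLp.volume_preserving_toLp _)).integral_comp
      e.toHomeomorph.measurableEmbedding F
  have he_fderiv (i x) : fderiv ℝ (fun x => w (e x)) x (Pi.single i 1) =
      fderiv ℝ w (e x) (b i) := by
    rw [← he_basis]
    exact DFunLike.congr_fun
      ((hw.differentiable one_ne_zero _).hasFDerivAt.comp x e.hasFDerivAt).fderiv _
  have henergy : ∑ i, ∫ x, fderiv ℝ w x (b i) ^ 2 = ∫ x, ‖fderiv ℝ w x‖ ^ 2 := by
    rw [← integral_finsetSum _ fun i _ => (((hw.continuous_fderiv one_ne_zero).clm_apply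
      continuous_const).memLp_of_hasCompactSupport (hs.fderiv_apply ℝ (b i))).integrable_sq]
    simp only [sum_sq_apply_orthonormalBasis]
  have hpi := integral_sq_mul_log_sq_le_sum_fderiv_single (hw.comp e.contDiff)
    (hs.comp_homeomorph e.toHomeomorph) hc
  simp only [Function.comp_def, he_fderiv, Fintype.card_fin] at hpi
  rwa [he_integral fun x => w x ^ 2 * Real.log (w x ^ 2), he_integral fun x => w x ^ 2,
    Finset.sum_congr rfl fun i _ => he_integral fun x => fderiv ℝ w x (b i) ^ 2, henergy] at hpi

end LogSobolev

section LogMax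

lemma log_le_rpow_div_mul_exp_one {y β : ℝ} (hy : 0 < y) (hβ : 0 < β) :
    Real.log y ≤ y ^ β / (β * Real.exp 1) := by
  rw [le_div_iff₀ (by positivity), Real.rpow_def_of_pos hy]
  linarith [Real.exp_one_mul_le_exp (x := Real.log y * β)]

lemma mul_log_le_mul_log_add_rpow_mul_rpow {y z α : ℝ} (hy : 0 ≤ y) (hz : 0 < z) (hα : α < 1) :
    y * Real.log z ≤ y * Real.log y + y ^ α * z ^ (1 - α) / ((1 - α) * Real.exp 1) := by
  have hβ : 0 < 1 - α := sub_pos.2 hα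
  rcases hy.eq_or_lt with rfl | hy
  · simp only [zero_mul, zero_add]
    positivity
  calc y * Real.log z = y * Real.log y + y * Real.log (z / y) := by
        rw [Real.log_div hz.ne' hy.ne']
        ring
    _ ≤ y * Real.log y + y * ((z / y) ^ (1 - α) / ((1 - α) * Real.exp 1)) := by
        gcongr
        exact log_le_rpow_div_mul_exp_one (by positivity) hβ
    _ = y * Real.log y + y ^ α * z ^ (1 - α) / ((1 - α) * Real.exp 1) := by
        have hpow : y * (y ^ (1 - α))⁻¹ = y ^ α := by
          rw [← Real.rpow_neg hy.le, mul_comm, ← Real.rpow_add_one hy.ne']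
          ring_nf
        rw [Real.div_rpow hz.le hy.le, ← hpow]
        ring

lemma sq_max_one_abs_rpow_le (a b p : ℝ) :
    (max 1 (max |a| |b|) ^ 2) ^ p ≤ (a ^ 2) ^ p + (b ^ 2) ^ p + 1 := by
  have ha : 0 ≤ (a ^ 2) ^ p := by positivity
  have hb : 0 ≤ (b ^ 2) ^ p := by positivity
  rcases max_choice 1 (max |a| |b|) with h | h
  · rw [h, one_pow, Real.one_rpow]
    linarith
  · rcases max_choice |a| |b| with h' | h' <;> rw [h, h', sq_abs] <;> linarith

lemma sq_sub_mul_log_max_le (a b : ℝ) {α : ℝ} (hα : α < 1) :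
    (a - b) ^ 2 * Real.log (max 1 (max |a| |b|)) ≤
      1 / 2 * ((a - b) ^ 2 * Real.log ((a - b) ^ 2)) +
        1 / (2 * (1 - α) * Real.exp 1) * (((a - b) ^ 2) ^ α * (a ^ 2) ^ (1 - α) +
          ((a - b) ^ 2) ^ α * (b ^ 2) ^ (1 - α) + ((a - b) ^ 2) ^ α) := by
  have hβ : 0 < 1 - α := sub_pos.2 hα
  set m := max 1 (max |a| |b|)
  set y := (a - b) ^ 2
  calc y * Real.log m = 1 / 2 * (y * Real.log (m ^ 2)) := by
        rw [Real.log_pow]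
        push_cast
        ring
    _ ≤ 1 / 2 * (y * Real.log y + y ^ α * (m ^ 2) ^ (1 - α) / ((1 - α) * Real.exp 1)) := by
        gcongr
        exact mul_log_le_mul_log_add_rpow_mul_rpow (sq_nonneg _) (by positivity) hα
    _ ≤ 1 / 2 * (y * Real.log y + y ^ α * ((a ^ 2) ^ (1 - α) + (b ^ 2) ^ (1 - α) + 1) /
          ((1 - α) * Real.exp 1)) := by
        gcongr
        exact sq_max_one_abs_rpow_le a b _
    _ = _ := by
        field_simp

lemma integrable_rpow_mul_rpow {X : Type*} [MeasurableSpace X] {μ : Measure X} {f g : X → ℝ}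
    (hf : Integrable f μ) (hg : Integrable g μ) (hf0 : ∀ x, 0 ≤ f x) (hg0 : ∀ x, 0 ≤ g x)
    {p q : ℝ} (hp : 0 ≤ p) (hq : 0 ≤ q) (hpq : p + q = 1) :
    Integrable (fun x => f x ^ p * g x ^ q) μ := by
  refine ((hf.const_mul p).add (hg.const_mul q)).mono'
    ((hf.1.aemeasurable.pow_const p).mul (hg.1.aemeasurable.pow_const q)).aestronglyMeasurable
    (.of_forall fun x => ?_)
  rw [Real.norm_of_nonneg (mul_nonneg (Real.rpow_nonneg (hf0 x) _) (Real.rpow_nonneg (hg0 x) _))]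
  exact Real.geom_mean_le_arith_mean2_weighted hp hq (hf0 x) (hg0 x) hpq

lemma integral_rpow_mul_rpow_le {X : Type*} [MeasurableSpace X] {μ : Measure X} {f g : X → ℝ}
    (hf : Integrable f μ) (hg : Integrable g μ) (hf0 : ∀ x, 0 ≤ f x) (hg0 : ∀ x, 0 ≤ g x)
    {p q : ℝ} (hp : 0 ≤ p) (hq : 0 ≤ q) (hpq : p + q = 1) :
    ∫ x, f x ^ p * g x ^ q ∂μ ≤ (∫ x, f x ∂μ) ^ p * (∫ x, g x ∂μ) ^ q := by
  have hfi : 0 ≤ ∫ x, f x ∂μ := integral_nonneg hf0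
  have hgi : 0 ≤ ∫ x, g x ∂μ := integral_nonneg hg0
  have hfg0 (x : X) : 0 ≤ f x ^ p * g x ^ q :=
    mul_nonneg (Real.rpow_nonneg (hf0 x) _) (Real.rpow_nonneg (hg0 x) _)
  rw [← ENNReal.ofReal_le_ofReal_iff (by positivity), ENNReal.ofReal_mul (by positivity),
    ← ENNReal.ofReal_rpow_of_nonneg hfi hp, ← ENNReal.ofReal_rpow_of_nonneg hgi hq,
    ofReal_integral_eq_lintegral_ofReal hf (.of_forall hf0),
    ofReal_integral_eq_lintegral_ofReal hg (.of_forall hg0),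
    ofReal_integral_eq_lintegral_ofReal (integrable_rpow_mul_rpow hf hg hf0 hg0 hp hq hpq)
      (.of_forall hfg0)]
  convert ENNReal.lintegral_mul_norm_pow_le hf.1.aemeasurable.ennreal_ofReal
    hg.1.aemeasurable.ennreal_ofReal hp hq hpq with x
  rw [ENNReal.ofReal_mul (Real.rpow_nonneg (hf0 x) _), ENNReal.ofReal_rpow_of_nonneg (hf0 x) hp,
    ENNReal.ofReal_rpow_of_nonneg (hg0 x) hq]

variable {X : Type*} [MeasurableSpace X] {μ : Measure X} [IsFiniteMeasure μ] {u v : X → ℝ}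

lemma integrable_sq_sub_mul_log_max (hu : MemLp u 2 μ) (hv : MemLp v 2 μ)
    (hlog : Integrable (fun x => (u x - v x) ^ 2 * Real.log ((u x - v x) ^ 2)) μ) :
    Integrable (fun x => (u x - v x) ^ 2 * Real.log (max 1 (max |u x| |v x|))) μ := by
  have hu' := hu.1.aemeasurable
  have hv' := hv.1.aemeasurable
  refine ((hlog.const_mul (1 / 2)).add (((hu.integrable_sq.add hv.integrable_sq).add
    (integrable_const 1)).const_mul (1 / (2 * Real.exp 1)))).mono'
    (((hu'.sub hv').pow_const 2).mul (aemeasurable_const.max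
      (hu'.abs.max hv'.abs)).log).aestronglyMeasurable (.of_forall fun x => ?_)
  rw [Real.norm_of_nonneg (mul_nonneg (sq_nonneg _) (Real.log_nonneg (le_max_left _ _)))]
  -- At `α = 0` the pointwise bound is an integrable dominating function.
  simpa using sq_sub_mul_log_max_le (u x) (v x) zero_lt_one

lemma integral_sq_sub_mul_log_max_le (hu : MemLp u 2 μ) (hv : MemLp v 2 μ)
    (hlog : Integrable (fun x => (u x - v x) ^ 2 * Real.log ((u x - v x) ^ 2)) μ)
    {α : ℝ} (hα0 : 0 ≤ α) (hα1 : α < 1) :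
    ∫ x, (u x - v x) ^ 2 * Real.log (max 1 (max |u x| |v x|)) ∂μ ≤
      1 / 2 * (∫ x, (u x - v x) ^ 2 * Real.log ((u x - v x) ^ 2) ∂μ) +
        1 / (2 * (1 - α) * Real.exp 1) * ((∫ x, u x ^ 2 ∂μ) ^ (1 - α) +
          (∫ x, v x ^ 2 ∂μ) ^ (1 - α) + μ.real Set.univ ^ (1 - α)) *
            (∫ x, (u x - v x) ^ 2 ∂μ) ^ α := by
  have hβ : 0 < 1 - α := sub_pos.2 hα1
  have hw : Integrable (fun x => (u x - v x) ^ 2) μ := (hu.sub hv).integrable_sq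
  have holder_integrable {f : X → ℝ} (hf : Integrable f μ) (hf0 : ∀ x, 0 ≤ f x) :
      Integrable (fun x => ((u x - v x) ^ 2) ^ α * f x ^ (1 - α)) μ :=
    integrable_rpow_mul_rpow hw hf (fun x => sq_nonneg _) hf0 hα0 hβ.le (by ring)
  have holder {f : X → ℝ} (hf : Integrable f μ) (hf0 : ∀ x, 0 ≤ f x) :
      ∫ x, ((u x - v x) ^ 2) ^ α * f x ^ (1 - α) ∂μ ≤
        (∫ x, (u x - v x) ^ 2 ∂μ) ^ α * (∫ x, f x ∂μ) ^ (1 - α) :=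
    integral_rpow_mul_rpow_le hw hf (fun x => sq_nonneg _) hf0 hα0 hβ.le (by ring)
  have hui := holder_integrable hu.integrable_sq fun x => sq_nonneg _
  have hvi := holder_integrable hv.integrable_sq fun x => sq_nonneg _
  have h1i : Integrable (fun x => ((u x - v x) ^ 2) ^ α) μ := by
    simpa using holder_integrable (integrable_const 1) fun _ => zero_le_one
  have hu_le := holder hu.integrable_sq fun x => sq_nonneg _
  have hv_le := holder hv.integrable_sq fun x => sq_nonneg _
  have h1_le : ∫ x, ((u x - v x) ^ 2) ^ α ∂μ ≤
      (∫ x, (u x - v x) ^ 2 ∂μ) ^ α * μ.real Set.univ ^ (1 - α) := by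
    simpa using holder (integrable_const 1) fun _ => zero_le_one
  have huvi : Integrable (fun x => ((u x - v x) ^ 2) ^ α * (u x ^ 2) ^ (1 - α) +
      ((u x - v x) ^ 2) ^ α * (v x ^ 2) ^ (1 - α)) μ := hui.add hvi
  have hpowi : Integrable (fun x => ((u x - v x) ^ 2) ^ α * (u x ^ 2) ^ (1 - α) +
      ((u x - v x) ^ 2) ^ α * (v x ^ 2) ^ (1 - α) + ((u x - v x) ^ 2) ^ α) μ := huvi.add h1i
  refine (integral_mono (integrable_sq_sub_mul_log_max hu hv hlog)
    ((hlog.const_mul _).add (hpowi.const_mul _))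
    fun x => sq_sub_mul_log_max_le (u x) (v x) hα1).trans ?_
  rw [integral_add' (hlog.const_mul _) (hpowi.const_mul _), integral_const_mul, integral_const_mul,
    integral_add huvi h1i, integral_add hui hvi, mul_assoc (1 / (2 * (1 - α) * Real.exp 1))]
  gcongr
  linarith

end LogMax

section SigmaDifference

open Module

lemma sq_sub_le_of_abs_sub_le {σ : ℝ → ℝ} {L₁ L₂ : ℝ}
    (hσ : ∀ x y : ℝ, |σ x - σ y| ≤ L₁ * |x - y|
      + L₂ * |x - y| * Real.sqrt (Real.log (max 1 (max |x| |y|)))) (x y : ℝ) :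
    (σ x - σ y) ^ 2 ≤ 2 * L₁ ^ 2 * (x - y) ^ 2 +
      2 * L₂ ^ 2 * ((x - y) ^ 2 * Real.log (max 1 (max |x| |y|))) := by
  have hlog : 0 ≤ Real.log (max 1 (max |x| |y|)) := Real.log_nonneg (le_max_left _ _)
  calc (σ x - σ y) ^ 2 = |σ x - σ y| ^ 2 := (sq_abs _).symm
    _ ≤ (L₁ * |x - y| + L₂ * |x - y| * √(Real.log (max 1 (max |x| |y|)))) ^ 2 := by
        gcongr
        exact hσ x y
    _ ≤ 2 * ((L₁ * |x - y|) ^ 2 + (L₂ * |x - y| * √(Real.log (max 1 (max |x| |y|)))) ^ 2) :=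
        add_sq_le
    _ = _ := by
        simp only [mul_pow, sq_abs, Real.sq_sqrt hlog]
        ring

variable {E : Type*} [NormedAddCommGroup E] [InnerProductSpace ℝ E] [FiniteDimensional ℝ E]
  [MeasurableSpace E] [BorelSpace E] {D : Set E} {u v : E → ℝ}

theorem setIntegral_sq_sub_mul_log_max_le (hD : volume D ≠ ⊤) (hu : MemLp u 2) (hv : MemLp v 2)
    (huv : ContDiff ℝ 1 fun x => u x - v x) (hsupp : HasCompactSupport fun x => u x - v x)
    (hsuppD : Function.support (fun x => u x - v x) ⊆ D) {ε : ℝ} (hε : 0 < ε) {α : ℝ}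
    (hα0 : 0 ≤ α) (hα1 : α < 1) :
    ∫ x in D, (u x - v x) ^ 2 * Real.log (max 1 (max |u x| |v x|)) ≤
      ε * (∫ x, ‖fderiv ℝ (fun y => u y - v y) x‖ ^ 2) +
        finrank ℝ E / 4 * Real.log (1 / ε) * (∫ x, (u x - v x) ^ 2) +
        (∫ x, (u x - v x) ^ 2) * Real.log √(∫ x, (u x - v x) ^ 2) +
        1 / (2 * (1 - α) * Real.exp 1) *
          ((∫ x, u x ^ 2) ^ (1 - α) + (∫ x, v x ^ 2) ^ (1 - α)) * (∫ x, (u x - v x) ^ 2) ^ α +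
        1 / (2 * (1 - α) * Real.exp 1) * volume.real D ^ (1 - α) *
          (∫ x, (u x - v x) ^ 2) ^ α := by
  have : IsFiniteMeasure (volume.restrict D) := ⟨by simpa using hD.lt_top⟩
  have hM0 : 0 ≤ ∫ x, (u x - v x) ^ 2 := integral_nonneg fun x => sq_nonneg _
  have hw_zero {x : E} (hx : x ∉ D) : u x - v x = 0 :=
    Function.notMem_support.1 fun h => hx (hsuppD h)
  have hw_eq : ∫ x in D, (u x - v x) ^ 2 = ∫ x, (u x - v x) ^ 2 :=
    setIntegral_eq_integral_of_forall_compl_eq_zero fun x hx => by simp [hw_zero hx]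
  have hwlog_eq : ∫ x in D, (u x - v x) ^ 2 * Real.log ((u x - v x) ^ 2) =
      ∫ x, (u x - v x) ^ 2 * Real.log ((u x - v x) ^ 2) :=
    setIntegral_eq_integral_of_forall_compl_eq_zero fun x hx => by simp [hw_zero hx]
  have hu_le : ∫ x in D, u x ^ 2 ≤ ∫ x, u x ^ 2 :=
    setIntegral_le_integral hu.integrable_sq (.of_forall fun x => sq_nonneg _)
  have hv_le : ∫ x in D, v x ^ 2 ≤ ∫ x, v x ^ 2 :=
    setIntegral_le_integral hv.integrable_sq (.of_forall fun x => sq_nonneg _)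
  have hdim : 0 ≤ finrank ℝ E / 4 * ∫ x, (u x - v x) ^ 2 := by positivity
  calc ∫ x in D, (u x - v x) ^ 2 * Real.log (max 1 (max |u x| |v x|))
      ≤ 1 / 2 * (∫ x, (u x - v x) ^ 2 * Real.log ((u x - v x) ^ 2)) +
          1 / (2 * (1 - α) * Real.exp 1) * ((∫ x in D, u x ^ 2) ^ (1 - α) +
            (∫ x in D, v x ^ 2) ^ (1 - α) + volume.real D ^ (1 - α)) *
              (∫ x, (u x - v x) ^ 2) ^ α := by
        simpa only [hw_eq, hwlog_eq, measureReal_restrict_apply_univ] using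
          integral_sq_sub_mul_log_max_le (hu.restrict D) (hv.restrict D)
            (integrable_sq_mul_log_sq huv.continuous hsupp) hα0 hα1
    _ ≤ 1 / 2 * ((∫ x, (u x - v x) ^ 2) * Real.log (∫ x, (u x - v x) ^ 2) +
          2 * ε * (∫ x, ‖fderiv ℝ (fun y => u y - v y) x‖ ^ 2) -
            finrank ℝ E / 2 * (1 + Real.log ε) * ∫ x, (u x - v x) ^ 2) +
          1 / (2 * (1 - α) * Real.exp 1) * ((∫ x, u x ^ 2) ^ (1 - α) +
            (∫ x, v x ^ 2) ^ (1 - α) + volume.real D ^ (1 - α)) *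
              (∫ x, (u x - v x) ^ 2) ^ α := by
        gcongr
        exact integral_sq_mul_log_sq_le huv hsupp hε
    _ ≤ _ := by
        rw [Real.log_sqrt hM0, one_div ε, Real.log_inv]
        linarith

theorem sigma_difference_square_bound_general (hD : volume D ≠ ⊤) {σ : ℝ → ℝ} {L₁ L₂ : ℝ}
    (hσ : ∀ x y : ℝ, |σ x - σ y| ≤ L₁ * |x - y|
      + L₂ * |x - y| * Real.sqrt (Real.log (max 1 (max |x| |y|))))
    (hu : MemLp u 2) (hv : MemLp v 2)
    (huv : ContDiff ℝ 1 fun x => u x - v x) (hsupp : HasCompactSupport fun x => u x - v x)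
    (hsuppD : Function.support (fun x => u x - v x) ⊆ D) {ε : ℝ} (hε : 0 < ε) {α : ℝ}
    (hα0 : 0 ≤ α) (hα1 : α < 1) :
    (∫ x in D, (σ (u x) - σ (v x)) ^ 2) ≤
      2 * L₁ ^ 2 * (∫ x, (u x - v x) ^ 2)
        + 2 * L₂ ^ 2 *
          (ε * (∫ x, ‖fderiv ℝ (fun y => u y - v y) x‖ ^ 2)
            + (finrank ℝ E / 4 : ℝ) * Real.log (1 / ε) * (∫ x, (u x - v x) ^ 2)
            + (∫ x, (u x - v x) ^ 2) * Real.log (Real.sqrt (∫ x, (u x - v x) ^ 2))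
            + (1 / (2 * (1 - α) * Real.exp 1)) *
                ((∫ x, u x ^ 2) ^ (1 - α) + (∫ x, v x ^ 2) ^ (1 - α)) *
                (∫ x, (u x - v x) ^ 2) ^ α
            + (1 / (2 * (1 - α) * Real.exp 1)) * (volume.real D) ^ (1 - α) *
                (∫ x, (u x - v x) ^ 2) ^ α) := by
  have : IsFiniteMeasure (volume.restrict D) := ⟨by simpa using hD.lt_top⟩
  have hw : Integrable fun x => (u x - v x) ^ 2 := (hu.sub hv).integrable_sq
  have hwlog := integrable_sq_sub_mul_log_max (hu.restrict D) (hv.restrict D)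
    (integrable_sq_mul_log_sq huv.continuous hsupp)
  calc ∫ x in D, (σ (u x) - σ (v x)) ^ 2
      ≤ ∫ x in D, (2 * L₁ ^ 2 * (u x - v x) ^ 2 +
          2 * L₂ ^ 2 * ((u x - v x) ^ 2 * Real.log (max 1 (max |u x| |v x|)))) :=
        integral_mono_of_nonneg (.of_forall fun x => sq_nonneg _)
          ((hw.restrict.const_mul _).add (hwlog.const_mul _))
          (.of_forall fun x => sq_sub_le_of_abs_sub_le hσ (u x) (v x))
    _ = 2 * L₁ ^ 2 * (∫ x in D, (u x - v x) ^ 2) +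
          2 * L₂ ^ 2 * ∫ x in D, (u x - v x) ^ 2 * Real.log (max 1 (max |u x| |v x|)) := by
        rw [integral_add (hw.restrict.const_mul _) (hwlog.const_mul _), integral_const_mul,
          integral_const_mul]
    _ ≤ _ := by
        gcongr
        · exact .of_forall fun x => sq_nonneg _
        · exact Measure.restrict_le_self
        · exact setIntegral_sq_sub_mul_log_max_le hD hu hv huv hsupp hsuppD hε hα0 hα1

end SigmaDifference

/-- If `|σ(x) − σ(y)| ≤ L₁|x−y| + L₂|x−y|(log₊ max(|x|,|y|))^{1/2}`, then for smooth `u, v`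
compactly supported in a bounded measurable set `D`, `ε > 0`, `α ∈ (0,1)`:
`∫_D |σ(u) − σ(v)|² ≤ 2L₁² ‖u−v‖² + 2L₂² [ε ‖∇(u−v)‖² + (d/4) log(1/ε) ‖u−v‖²
  + ‖u−v‖² log‖u−v‖ + (1/(2(1−α)e))(‖u‖^{2(1−α)} + ‖v‖^{2(1−α)})‖u−v‖^{2α}
  + (1/(2(1−α)e))(4m(D))^{1−α}‖u−v‖^{2α}]`. -/
theorem sigma_difference_square_bound
    (d : ℕ) (hd : 1 ≤ d)
    (D : Set (EuclideanSpace ℝ (Fin d)))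
    (hDmeas : MeasurableSet D) (hDbdd : Bornology.IsBounded D)
    (σ : ℝ → ℝ) (L₁ L₂ : ℝ) (hL₁ : 0 < L₁) (hL₂ : 0 < L₂)
    (hσ : ∀ x y : ℝ, |σ x - σ y| ≤ L₁ * |x - y|
      + L₂ * |x - y| * Real.sqrt (Real.log (max 1 (max |x| |y|))))
    (u v : EuclideanSpace ℝ (Fin d) → ℝ)
    (hu : ContDiff ℝ (⊤ : ℕ∞) u) (husupp : HasCompactSupport u) (husuppD : tsupport u ⊆ D)
    (hv : ContDiff ℝ (⊤ : ℕ∞) v) (hvsupp : HasCompactSupport v) (hvsuppD : tsupport v ⊆ D)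
    (ε : ℝ) (hε : 0 < ε) (α : ℝ) (hα0 : 0 < α) (hα1 : α < 1) :
    (∫ x in D, (σ (u x) - σ (v x)) ^ 2) ≤
      2 * L₁ ^ 2 * (∫ x, (u x - v x) ^ 2)
        + 2 * L₂ ^ 2 *
          (ε * (∫ x, ‖fderiv ℝ (fun y => u y - v y) x‖ ^ 2)
            + (d / 4 : ℝ) * Real.log (1 / ε) * (∫ x, (u x - v x) ^ 2)
            + (∫ x, (u x - v x) ^ 2) * Real.log (Real.sqrt (∫ x, (u x - v x) ^ 2))
            + (1 / (2 * (1 - α) * Real.exp 1)) *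
                ((∫ x, u x ^ 2) ^ (1 - α) + (∫ x, v x ^ 2) ^ (1 - α)) *
                (∫ x, (u x - v x) ^ 2) ^ α
            + (1 / (2 * (1 - α) * Real.exp 1)) * (4 * (volume D).toReal) ^ (1 - α) *
                (∫ x, (u x - v x) ^ 2) ^ α) := by
  have hsupp : Function.support (fun x => u x - v x) ⊆ D :=
    (Function.support_sub u v).trans
      (Set.union_subset ((subset_tsupport u).trans husuppD) ((subset_tsupport v).trans hvsuppD))
  have hbound := sigma_difference_square_bound_general hDbdd.measure_lt_top.ne hσ
    (hu.continuous.memLp_of_hasCompactSupport husupp)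
    (hv.continuous.memLp_of_hasCompactSupport hvsupp) ((hu.sub hv).of_le (by simp))
    (husupp.sub hvsupp) hsupp hε hα0.le hα1
  rw [finrank_euclideanSpace_fin] at hbound
  refine hbound.trans ?_
  gcongr
  exact le_mul_of_one_le_left ENNReal.toReal_nonneg (by norm_num)
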